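/- Every joint probability matrix all of whose entries are strictly positive is a good matrix. -/

import Mathlib

open scoped BigOperators Classical

noncomputable section

/-- Probability of an event `E` under a distribution `μ` on a finite sample space `Ω`. -/
def pr {Ω : Type} [Fintype Ω] (μ : Ω → ℝ) (E : Ω → Prop) : ℝ :=
  ∑ ω, if E ω then μ ω else 0

/-- `μ` is a probability distribution on the finite space `Ω`. -/
def IsProb {Ω : Type} [Fintype Ω] (μ : Ω → ℝ) : Prop :=
  (∀ ω, 0 ≤ μ ω) ∧ ∑ ω, μ ω = 1

/-- Shannon entropy (base 2) of a random variable `α` on a finite probability space. -/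
def ent {Ω A : Type} [Fintype Ω] (μ : Ω → ℝ) (α : Ω → A) : ℝ :=
  -∑ a ∈ Finset.univ.image α,
      pr μ (fun ω => α ω = a) * Real.logb 2 (pr μ (fun ω => α ω = a))

/-- Conditional entropy `H(α | β)`. -/
def condEnt {Ω A B : Type} [Fintype Ω] (μ : Ω → ℝ) (α : Ω → A) (β : Ω → B) : ℝ :=
  ent μ (fun ω => (α ω, β ω)) - ent μ β

/-- Mutual information `I(α : β)`. -/
def mutualInfo {Ω A B : Type} [Fintype Ω] (μ : Ω → ℝ) (α : Ω → A) (β : Ω → B) : ℝ :=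
  ent μ α + ent μ β - ent μ (fun ω => (α ω, β ω))

/-- Conditional mutual information `I(α : β | γ)`. -/
def condMutualInfo {Ω A B C : Type} [Fintype Ω] (μ : Ω → ℝ)
    (α : Ω → A) (β : Ω → B) (γ : Ω → C) : ℝ :=
  condEnt μ α γ + condEnt μ β γ - condEnt μ (fun ω => (α ω, β ω)) γ

/-- Independence of two random variables. -/
def Indep {Ω A B : Type} [Fintype Ω] (μ : Ω → ℝ) (α : Ω → A) (β : Ω → B) : Prop :=
  ∀ (a : A) (b : B),
    pr μ (fun ω => α ω = a ∧ β ω = b) =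
      pr μ (fun ω => α ω = a) * pr μ (fun ω => β ω = b)

/-- Auxiliary form of "conditionally independent of order `k`" (explicit `Fintype`):
`α` and `β` are conditionally independent of order `0` if they are independent,
and of order `k + 1` if on some finite probability space there are random variables
`α₀, β₀, α*, β*` such that `(α₀, β₀)` has the same joint distribution as `(α, β)`,
`I(α₀ : β₀ | α*) = 0`, `I(α₀ : β₀ | β*) = 0`, and `α*, β*` are conditionally
independent of order `k`. -/
def CondIndepOrderAux : ℕ → (Ω A B : Type) → Fintype Ω → (Ω → ℝ) → (Ω → A) → (Ω → B) → Prop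
  | 0, _Ω, _A, _B, iΩ, μ, α, β => @Indep _ _ _ iΩ μ α β
  | k+1, _Ω, A, B, iΩ, μ, α, β =>
      ∃ (Ω' A' B' : Type) (iΩ' : Fintype Ω') (μ' : Ω' → ℝ)
        (α₀ : Ω' → A) (β₀ : Ω' → B) (αs : Ω' → A') (βs : Ω' → B'),
        @IsProb _ iΩ' μ' ∧
        (∀ (a : A) (b : B),
          @pr _ iΩ' μ' (fun ω => α₀ ω = a ∧ β₀ ω = b) =
            @pr _ iΩ μ (fun ω => α ω = a ∧ β ω = b)) ∧
        @condMutualInfo _ _ _ _ iΩ' μ' α₀ β₀ αs = 0 ∧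
        @condMutualInfo _ _ _ _ iΩ' μ' α₀ β₀ βs = 0 ∧
        CondIndepOrderAux k Ω' A' B' iΩ' μ' αs βs

/-- Random variables `α` and `β` on a finite probability space are
conditionally independent of order `k`. -/
def CondIndepOrder {Ω A B : Type} [iΩ : Fintype Ω]
    (μ : Ω → ℝ) (α : Ω → A) (β : Ω → B) (k : ℕ) : Prop :=
  CondIndepOrderAux k Ω A B iΩ μ α β

/-- An `m × n` joint probability matrix: nonnegative entries summing to `1`. -/
def IsJointProbMatrix {m n : ℕ} (M : Matrix (Fin m) (Fin n) ℝ) : Prop :=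
  (∀ i j, 0 ≤ M i j) ∧ ∑ i, ∑ j, M i j = 1

/-- `M` is the joint probability matrix of the pair `(α, β)`. -/
def IsJointMatrixOf {Ω : Type} [Fintype Ω] {m n : ℕ} (M : Matrix (Fin m) (Fin n) ℝ)
    (μ : Ω → ℝ) (α : Ω → Fin m) (β : Ω → Fin n) : Prop :=
  ∀ i j, M i j = pr μ (fun ω => α ω = i ∧ β ω = j)

/-- `M` is a block matrix: rows and columns can be partitioned into two nonempty
parts so that the two diagonal blocks each contain a nonzero element and all
entries outside the diagonal blocks vanish. -/
def IsBlockMatrix {m n : ℕ} (M : Matrix (Fin m) (Fin n) ℝ) : Prop :=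
  ∃ (I₁ : Finset (Fin m)) (J₁ : Finset (Fin n)),
    I₁.Nonempty ∧ I₁ᶜ.Nonempty ∧ J₁.Nonempty ∧ J₁ᶜ.Nonempty ∧
    (∃ i ∈ I₁, ∃ j ∈ J₁, M i j ≠ 0) ∧
    (∃ i ∈ I₁ᶜ, ∃ j ∈ J₁ᶜ, M i j ≠ 0) ∧
    (∀ i j, ((i ∈ I₁ ∧ j ∈ J₁ᶜ) ∨ (i ∈ I₁ᶜ ∧ j ∈ J₁)) → M i j = 0)

/-- `M` is a good matrix: the joint probability matrix of some pair of
conditionally independent random variables (of some finite order). -/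
def IsGoodMatrix {m n : ℕ} (M : Matrix (Fin m) (Fin n) ℝ) : Prop :=
  ∃ (Ω : Type) (iΩ : Fintype Ω) (μ : Ω → ℝ) (α : Ω → Fin m) (β : Ω → Fin n) (k : ℕ),
    @IsProb _ iΩ μ ∧ @IsJointMatrixOf _ iΩ _ _ M μ α β ∧
    @CondIndepOrder _ _ _ iΩ μ α β k

/-- A stochastic matrix: nonnegative entries, all row sums equal to `1`. -/
def IsStochastic {m n : ℕ} (A : Matrix (Fin m) (Fin n) ℝ) : Prop :=
  (∀ i j, 0 ≤ A i j) ∧ ∀ i, ∑ j, A i j = 1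

/-- The matrix `D_ε`: diagonal entries `1/2 - ε`, off-diagonal entries `ε`. -/
def Dmat (ε : ℝ) : Matrix (Fin 2) (Fin 2) ℝ :=
  fun i j => if i = j then 1/2 - ε else ε

/-- The distribution of `n` i.i.d. trials, each distributed according to `μ`. -/
def iidMeasure {Ω : Type} [Fintype Ω] (μ : Ω → ℝ) (n : ℕ) : (Fin n → Ω) → ℝ :=
  fun ωv => ∏ i, μ (ωv i)

/-- The sequence of `n` coordinatewise copies of a random variable. -/
def iidRV {Ω A : Type} (α : Ω → A) (n : ℕ) : (Fin n → Ω) → (Fin n → A) :=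
  fun ωv i => α (ωv i)

/-- `(u, v, w)` belongs to the rate region of the pair `(α, β)`. -/
def InRateRegion {Ω A B : Type} [Fintype Ω] (μ : Ω → ℝ) (α : Ω → A) (β : Ω → B)
    (u v w : ℝ) : Prop :=
  0 ≤ u ∧ 0 ≤ v ∧ 0 ≤ w ∧
  ∀ ε > (0:ℝ), ∀ δ > (0:ℝ), ∃ n₀ : ℕ, ∀ n ≥ n₀,
    ∃ (t : (Fin n → A) × (Fin n → B) → (Fin ⌊(u + δ) * n⌋₊ → Bool))
      (f : (Fin n → A) × (Fin n → B) → (Fin ⌊(v + δ) * n⌋₊ → Bool))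
      (g : (Fin n → A) × (Fin n → B) → (Fin ⌊(w + δ) * n⌋₊ → Bool))
      (r : (Fin ⌊(u + δ) * n⌋₊ → Bool) × (Fin ⌊(v + δ) * n⌋₊ → Bool) → (Fin n → A))
      (s : (Fin ⌊(u + δ) * n⌋₊ → Bool) × (Fin ⌊(w + δ) * n⌋₊ → Bool) → (Fin n → B)),
      pr (iidMeasure μ n) (fun ωv =>
          r (t (iidRV α n ωv, iidRV β n ωv), f (iidRV α n ωv, iidRV β n ωv)) = iidRV α n ωv)
        > 1 - ε ∧
      pr (iidMeasure μ n) (fun ωv =>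
          s (t (iidRV α n ωv, iidRV β n ωv), g (iidRV α n ωv, iidRV β n ωv)) = iidRV β n ωv)
        > 1 - ε

/-- The support of a matrix: the set of positions of its nonzero entries. -/
def msupport {m n : ℕ} (M : Matrix (Fin m) (Fin n) ℝ) : Set (Fin m × Fin n) :=
  {p | M p.1 p.2 ≠ 0}

/-- An r-matrix: nonnegative entries and rectangular support. -/
def IsRMatrix {m n : ℕ} (M : Matrix (Fin m) (Fin n) ℝ) : Prop :=
  (∀ i j, 0 ≤ M i j) ∧ ∃ (A : Set (Fin m)) (B : Set (Fin n)), msupport M = A ×ˢ B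

/-- An r-decomposition of `M`: an expression of `M` as a finite sum of r-matrices
such that the supports of consecutive summands intersect. -/
def IsRDecomposition {m n : ℕ} (M : Matrix (Fin m) (Fin n) ℝ)
    (l : ℕ) (Ms : Fin l → Matrix (Fin m) (Fin n) ℝ) : Prop :=
  M = ∑ i, Ms i ∧ (∀ i, IsRMatrix (Ms i)) ∧
  ∀ (i : ℕ) (h : i + 1 < l),
    (msupport (Ms ⟨i, Nat.lt_of_succ_lt h⟩) ∩ msupport (Ms ⟨i + 1, h⟩)).Nonempty

end

/-!
Call a nonnegative table good if finitely many couplings that make the two variables independent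
given either new variable lead from it to a table of rank one. Good tables are closed under
Kronecker products and under pushforward along maps of the rows and columns.

A positive `2 × 2` table of nonnegative determinant is good: it couples to a corner table
`!![p, r₂; r₁, 0]` with `p > 0`, which in turn couples to every table `!![r₂, b; c, r₁]` with
`b + c = p`. If `4 * r₁ * r₂ ≤ p ^ 2`, some choice of `b` and `c` gives rank one; otherwise taking
`b = c` and coupling to a corner table again lowers `4 * r₁ * r₂` by at least `p ^ 2` without
lowering `p`, so finitely many round trips suffice.

Collapsing one of the two blocks of rows and of columns in a Kronecker product with a positive
`2 × 2` table adds one outcome to a noisy diagonal `diagonal w + k • vecMulVec w w`, so all noisy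
diagonals with `k > 0` and `w > 0` are good. Finally, a positive table `M` has the form
`L + k • vecMulVec p q` for some `k > 0` and positive `L` with marginals `p` and `q`, and this is
the pushforward along the two projections of the noisy diagonal on `A × B` with weights `L`.
-/

open Matrix
open scoped Kronecker

section Probability

variable {Ω A B C : Type} [Fintype Ω] {μ : Ω → ℝ}

theorem pr_pos {E : Ω → Prop} {ω : Ω} (hμ : ∀ ω, 0 ≤ μ ω) (hω : μ ω ≠ 0) (hE : E ω) :
    0 < pr μ E := by
  refine Finset.sum_pos' (fun ω' _ => ?_) ⟨ω, Finset.mem_univ ω, ?_⟩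
  · split_ifs
    exacts [hμ ω', le_rfl]
  · rw [if_pos hE]
    exact (hμ ω).lt_of_ne' hω

theorem pr_eq_sum_pr_and [Fintype B] (μ : Ω → ℝ) (β : Ω → B) (E : Ω → Prop) :
    pr μ E = ∑ b, pr μ (fun ω => E ω ∧ β ω = b) := by
  unfold pr
  rw [Finset.sum_comm]
  refine Finset.sum_congr rfl fun ω _ => ?_
  by_cases h : E ω <;> simp [h]

theorem pr_eq_sum_pr_and_left [Fintype A] (μ : Ω → ℝ) (α : Ω → A) (E : Ω → Prop) :
    pr μ E = ∑ a, pr μ (fun ω => α ω = a ∧ E ω) := by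
  simp only [and_comm, ← pr_eq_sum_pr_and]

theorem ent_eq_neg_sum_logb (μ : Ω → ℝ) (α : Ω → A) :
    ent μ α = -∑ ω, μ ω * Real.logb 2 (pr μ (fun ω' => α ω' = α ω)) := by
  unfold ent
  rw [← Finset.sum_fiberwise_of_maps_to (t := Finset.univ.image α)
    (fun ω _ => Finset.mem_image_of_mem α (Finset.mem_univ ω))]
  refine congrArg Neg.neg (Finset.sum_congr rfl fun a _ => ?_)
  calc pr μ (fun ω => α ω = a) * Real.logb 2 (pr μ (fun ω => α ω = a))
      = ∑ ω with α ω = a, μ ω * Real.logb 2 (pr μ (fun ω' => α ω' = a)) := by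
        rw [← Finset.sum_mul, Finset.sum_filter, pr]
    _ = ∑ ω with α ω = a, μ ω * Real.logb 2 (pr μ (fun ω' => α ω' = α ω)) :=
        Finset.sum_congr rfl fun ω hω => by rw [(Finset.mem_filter.1 hω).2]

theorem condMutualInfo_eq_zero {α : Ω → A} {β : Ω → B} {γ : Ω → C} (hμ : ∀ ω, 0 ≤ μ ω)
    (h : ∀ a b c, pr μ (fun ω => (α ω = a ∧ β ω = b) ∧ γ ω = c) * pr μ (fun ω => γ ω = c) =
      pr μ (fun ω => α ω = a ∧ γ ω = c) * pr μ (fun ω => β ω = b ∧ γ ω = c)) :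
    condMutualInfo μ α β γ = 0 := by
  have pointwise (ω : Ω) :
      μ ω * Real.logb 2 (pr μ (fun ω' => (α ω' = α ω ∧ β ω' = β ω) ∧ γ ω' = γ ω)) +
        μ ω * Real.logb 2 (pr μ (fun ω' => γ ω' = γ ω)) =
      μ ω * Real.logb 2 (pr μ (fun ω' => α ω' = α ω ∧ γ ω' = γ ω)) +
        μ ω * Real.logb 2 (pr μ (fun ω' => β ω' = β ω ∧ γ ω' = γ ω)) := by
    by_cases hω : μ ω = 0
    · simp [hω]
    have pr_ne_zero (E : Ω → Prop) (hE : E ω) : pr μ E ≠ 0 := (pr_pos hμ hω hE).ne'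
    rw [← mul_add, ← mul_add, ← Real.logb_mul, ← Real.logb_mul, h]
    all_goals exact pr_ne_zero _ (by simp only [and_self])
  have total := Finset.sum_congr (rfl : Finset.univ = Finset.univ) fun ω _ => pointwise ω
  simp only [Finset.sum_add_distrib] at total
  simp only [condMutualInfo, condEnt, ent_eq_neg_sum_logb, Prod.mk.injEq]
  linarith

end Probability

section MinorsVanish

variable {A B C D : Type}

/-- All `2 × 2` minors of `M` vanish, i.e. `M` has rank at most one. For a joint probability
matrix this says that the two random variables are independent. -/
def MinorsVanish (M : Matrix A B ℝ) : Prop :=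
  ∀ a a' b b', M a b * M a' b' = M a b' * M a' b

theorem minorsVanish_vecMulVec (u : A → ℝ) (v : B → ℝ) :
    MinorsVanish (vecMulVec u v) := fun a a' b b' => by
  simp only [vecMulVec_apply]
  ring

theorem minorsVanish_of_subsingleton [Subsingleton B] {M : Matrix A B ℝ} : MinorsVanish M :=
  fun a a' b b' => by rw [Subsingleton.elim b b']

theorem minorsVanish_fin_two {M : Matrix (Fin 2) (Fin 2) ℝ}
    (h : M 0 0 * M 1 1 = M 0 1 * M 1 0) : MinorsVanish M := by
  simp only [MinorsVanish, Fin.forall_fin_two]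
  grind

namespace MinorsVanish

theorem kronecker {M : Matrix A B ℝ} {N : Matrix C D ℝ} (hM : MinorsVanish M)
    (hN : MinorsVanish N) : MinorsVanish (M ⊗ₖ N) := by
  rintro ⟨a, c⟩ ⟨a', c'⟩ ⟨b, d⟩ ⟨b', d'⟩
  simp only [kroneckerMap_apply]
  rw [mul_mul_mul_comm, hM, hN, mul_mul_mul_comm]

theorem mul_sum_sum [Fintype A] [Fintype B] {M : Matrix A B ℝ} (hM : MinorsVanish M)
    (a : A) (b : B) : M a b * ∑ a', ∑ b', M a' b' = (∑ b', M a b') * ∑ a', M a' b := by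
  rw [Finset.sum_mul_sum, Finset.sum_comm]
  simp only [Finset.mul_sum, hM a _ b]

end MinorsVanish

theorem condMutualInfo_eq_zero_of_minorsVanish {Ω : Type} [Fintype Ω] [Finite A] [Finite B]
    {μ : Ω → ℝ} {α : Ω → A} {β : Ω → B} {γ : Ω → C} (hμ : ∀ ω, 0 ≤ μ ω)
    (h : ∀ c, MinorsVanish (of fun a b => pr μ (fun ω => (α ω = a ∧ β ω = b) ∧ γ ω = c))) :
    condMutualInfo μ α β γ = 0 := by
  have := Fintype.ofFinite A
  have := Fintype.ofFinite B
  refine condMutualInfo_eq_zero hμ fun a b c => ?_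
  have sum_left (b : B) : ∑ a, pr μ (fun ω => (α ω = a ∧ β ω = b) ∧ γ ω = c) =
      pr μ (fun ω => β ω = b ∧ γ ω = c) := by
    simp only [and_assoc, ← pr_eq_sum_pr_and_left]
  have sum_right (a : A) : ∑ b, pr μ (fun ω => (α ω = a ∧ β ω = b) ∧ γ ω = c) =
      pr μ (fun ω => α ω = a ∧ γ ω = c) := by
    simp only [and_right_comm (b := β _ = _), ← pr_eq_sum_pr_and]
  have sum_sum : ∑ a, pr μ (fun ω => α ω = a ∧ γ ω = c) = pr μ (fun ω => γ ω = c) :=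
    (pr_eq_sum_pr_and_left μ α _).symm
  simpa only [of_apply, sum_left, sum_right, sum_sum] using (h c).mul_sum_sum a b

end MinorsVanish

section Pushforward

variable {A B A' B' : Type} [Fintype A'] [Fintype B']

/-- The table with entries `∑ N a' b'` over `f a' = a`, `g b' = b`: if `N` is the table of
`(α, β)`, this is the table of `(f(α), g(β))`. -/
noncomputable def pushforward (f : A' → A) (g : B' → B) (N : Matrix A' B' ℝ) : Matrix A B ℝ :=
  of fun a b => ∑ a', ∑ b', if f a' = a then if g b' = b then N a' b' else 0 else 0

theorem pushforward_equiv (e : A' ≃ A) (e' : B' ≃ B) (N : Matrix A' B' ℝ) :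
    pushforward e e' N = N.submatrix e.symm e'.symm := by
  ext a b
  simp [pushforward, ← Equiv.eq_symm_apply, Finset.sum_ite_irrel]

end Pushforward

section Coupling

variable {A B A' B' C D C' D' : Type} [Fintype A] [Fintype B] [Fintype A'] [Fintype B']
  [Fintype C] [Fintype D] [Fintype C'] [Fintype D']

/-- `P` is the (unnormalized) joint law of variables `α₀, β₀, α*, β*` such that `(α₀, β₀)` has
table `M`, `(α*, β*)` has table `N`, and `α₀, β₀` are independent given `α*` as well as
given `β*`. -/
structure IsCondIndepCoupling (M : Matrix A B ℝ) (N : Matrix A' B' ℝ)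
    (P : A → B → A' → B' → ℝ) : Prop where
  nonneg : ∀ a b a' b', 0 ≤ P a b a' b'
  sum_right : ∀ a b, ∑ a', ∑ b', P a b a' b' = M a b
  sum_left : ∀ a' b', ∑ a, ∑ b, P a b a' b' = N a' b'
  minorsVanish_left : ∀ a', MinorsVanish (of fun a b => ∑ b', P a b a' b')
  minorsVanish_right : ∀ b', MinorsVanish (of fun a b => ∑ a', P a b a' b')

namespace IsCondIndepCoupling

variable {M : Matrix A B ℝ} {N : Matrix A' B' ℝ} {P : A → B → A' → B' → ℝ}

theorem nonneg_left (h : IsCondIndepCoupling M N P) (a : A) (b : B) : 0 ≤ M a b :=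
  h.sum_right a b ▸ Finset.sum_nonneg fun _ _ => Finset.sum_nonneg fun _ _ => h.nonneg _ _ _ _

theorem sum_sum_eq (h : IsCondIndepCoupling M N P) :
    ∑ a, ∑ b, M a b = ∑ a', ∑ b', N a' b' := by
  simp only [← h.sum_right, ← h.sum_left]
  calc ∑ a, ∑ b, ∑ a', ∑ b', P a b a' b'
      = ∑ p : A × B, ∑ q : A' × B', P p.1 p.2 q.1 q.2 := by simp only [Fintype.sum_prod_type]
    _ = ∑ q : A' × B', ∑ p : A × B, P p.1 p.2 q.1 q.2 := Finset.sum_comm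
    _ = ∑ a', ∑ b', ∑ a, ∑ b, P a b a' b' := by simp only [Fintype.sum_prod_type]

theorem kronecker {M' : Matrix C D ℝ} {N' : Matrix C' D' ℝ} {P' : C → D → C' → D' → ℝ}
    (h : IsCondIndepCoupling M N P) (h' : IsCondIndepCoupling M' N' P') :
    IsCondIndepCoupling (M ⊗ₖ M') (N ⊗ₖ N')
      (fun p q p' q' => P p.1 q.1 p'.1 q'.1 * P' p.2 q.2 p'.2 q'.2) where
  nonneg _ _ _ _ := mul_nonneg (h.nonneg _ _ _ _) (h'.nonneg _ _ _ _)
  sum_right p q := by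
    simp only [Fintype.sum_prod_type, ← Finset.sum_mul_sum, kroneckerMap_apply, h.sum_right,
      h'.sum_right]
  sum_left p' q' := by
    simp only [Fintype.sum_prod_type, ← Finset.sum_mul_sum, kroneckerMap_apply, h.sum_left,
      h'.sum_left]
  minorsVanish_left p' := by
    simp only [Fintype.sum_prod_type, ← Finset.sum_mul_sum]
    exact (h.minorsVanish_left p'.1).kronecker (h'.minorsVanish_left p'.2)
  minorsVanish_right q' := by
    simp only [Fintype.sum_prod_type, ← Finset.sum_mul_sum]
    exact (h.minorsVanish_right q'.1).kronecker (h'.minorsVanish_right q'.2)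

theorem pushforward (f : A' → A) (g : B' → B) (hN : ∀ a' b', 0 ≤ N a' b') :
    IsCondIndepCoupling (pushforward f g N) N
      (fun a b a' b' => if f a' = a then if g b' = b then N a' b' else 0 else 0) where
  nonneg a b a' b' := by
    split_ifs
    exacts [hN a' b', le_rfl, le_rfl]
  sum_right _ _ := rfl
  sum_left a' b' := by simp [Finset.sum_ite_irrel]
  minorsVanish_left a' := by
    convert minorsVanish_vecMulVec (fun a => if f a' = a then 1 else 0)
      (fun b => ∑ b', if g b' = b then N a' b' else 0) using 1
    ext a b
    simp [vecMulVec_apply, Finset.sum_ite_irrel]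
  minorsVanish_right b' := by
    convert minorsVanish_vecMulVec (fun a => ∑ a', if f a' = a then N a' b' else 0)
      (fun b => if g b' = b then 1 else 0) using 1
    ext a b
    by_cases h : g b' = b <;> simp [vecMulVec_apply, h]

theorem refl (hM : ∀ a b, 0 ≤ M a b) : ∃ P, IsCondIndepCoupling M M P := by
  have h := IsCondIndepCoupling.pushforward id id hM
  rw [← Equiv.coe_refl, ← Equiv.coe_refl, pushforward_equiv] at h
  exact ⟨_, h⟩

end IsCondIndepCoupling

/-- Tables obtained from product tables by finitely many conditional-independence couplings.
These are the unnormalized joint tables of conditionally independent pairs; leaving out the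
condition on the sum of the entries makes the class closed under rescaling. -/
inductive IsGoodTable : ∀ {A B : Type} [Fintype A] [Fintype B], Matrix A B ℝ → Prop
  | of_minorsVanish {A B : Type} [Fintype A] [Fintype B] {M : Matrix A B ℝ}
      (nonneg : ∀ a b, 0 ≤ M a b) (hM : MinorsVanish M) : IsGoodTable M
  | of_coupling {A B A' B' : Type} [Fintype A] [Fintype B] [Fintype A'] [Fintype B']
      {M : Matrix A B ℝ} {N : Matrix A' B' ℝ} {P : A → B → A' → B' → ℝ}
      (h : IsCondIndepCoupling M N P) (hN : IsGoodTable N) : IsGoodTable M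

namespace IsGoodTable

theorem nonneg {M : Matrix A B ℝ} (hM : IsGoodTable M) (a : A) (b : B) : 0 ≤ M a b := by
  cases hM with
  | of_minorsVanish nonneg _ => exact nonneg a b
  | of_coupling h _ => exact h.nonneg_left a b

protected theorem pushforward {N : Matrix A' B' ℝ} (hN : IsGoodTable N) (f : A' → A)
    (g : B' → B) : IsGoodTable (pushforward f g N) :=
  of_coupling (.pushforward f g hN.nonneg) hN

theorem kronecker {M : Matrix A B ℝ} {N : Matrix C D ℝ} (hM : IsGoodTable M)
    (hN : IsGoodTable N) : IsGoodTable (M ⊗ₖ N) := by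
  induction hM with
  | of_minorsVanish nonneg hM =>
    induction hN with
    | of_minorsVanish nonneg' hN =>
      exact of_minorsVanish (fun _ _ => mul_nonneg (nonneg _ _) (nonneg' _ _)) (hM.kronecker hN)
    | of_coupling h _ ih =>
      obtain ⟨P, hP⟩ := IsCondIndepCoupling.refl nonneg
      exact of_coupling (hP.kronecker h) ih
  | of_coupling h _ ih =>
    obtain ⟨P, hP⟩ := IsCondIndepCoupling.refl hN.nonneg
    exact of_coupling (h.kronecker hP) ih

end IsGoodTable

end Coupling

section Realization

variable {A B A' B' : Type} [Fintype A] [Fintype B] [Fintype A'] [Fintype B']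

theorem pr_fst_eq_and_snd_eq (M : Matrix A B ℝ) (a : A) (b : B) :
    pr (fun ω : A × B => M ω.1 ω.2) (fun ω => ω.1 = a ∧ ω.2 = b) = M a b := by
  simp only [pr, Fintype.sum_prod_type, ite_and]
  simp [Finset.sum_ite_irrel]

theorem MinorsVanish.indep {Ω : Type} [Fintype Ω] {μ : Ω → ℝ} {α : Ω → A} {β : Ω → B}
    {M : Matrix A B ℝ} (hM : MinorsVanish M) (hsum : ∑ a, ∑ b, M a b = 1)
    (h : ∀ a b, pr μ (fun ω => α ω = a ∧ β ω = b) = M a b) : Indep μ α β := by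
  intro a b
  rw [pr_eq_sum_pr_and μ β (fun ω => α ω = a), pr_eq_sum_pr_and_left μ α (fun ω => β ω = b)]
  simpa only [h, hsum, mul_one] using hM.mul_sum_sum a b

theorem IsCondIndepCoupling.condIndepOrder_succ {Ω : Type} [Fintype Ω] {μ : Ω → ℝ} {α : Ω → A}
    {β : Ω → B} {M : Matrix A B ℝ} {N : Matrix A' B' ℝ} {P : A → B → A' → B' → ℝ} {k : ℕ}
    (hP : IsCondIndepCoupling M N P) (hsum : ∑ a, ∑ b, M a b = 1)
    (h : ∀ a b, pr μ (fun ω => α ω = a ∧ β ω = b) = M a b)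
    (hN : ∀ (ν : A × B × A' × B' → ℝ) (α' : A × B × A' × B' → A') (β' : A × B × A' × B' → B'),
      (∀ a' b', pr ν (fun ω => α' ω = a' ∧ β' ω = b') = N a' b') → CondIndepOrder ν α' β' k) :
    CondIndepOrder μ α β (k + 1) := by
  refine ⟨A × B × A' × B', A', B', inferInstance, fun ω => P ω.1 ω.2.1 ω.2.2.1 ω.2.2.2,
    fun ω => ω.1, fun ω => ω.2.1, fun ω => ω.2.2.1, fun ω => ω.2.2.2,
    ⟨fun ω => hP.nonneg _ _ _ _, ?_⟩, fun a b => ?_,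
    condMutualInfo_eq_zero_of_minorsVanish (fun ω => hP.nonneg _ _ _ _) fun a' => ?_,
    condMutualInfo_eq_zero_of_minorsVanish (fun ω => hP.nonneg _ _ _ _) fun b' => ?_,
    hN _ _ _ fun a' b' => ?_⟩
  · simpa only [Fintype.sum_prod_type, hP.sum_right] using hsum
  · rw [h, ← hP.sum_right]
    simp only [pr, Fintype.sum_prod_type, ite_and]
    simp [Finset.sum_ite_irrel]
  · convert hP.minorsVanish_left a' using 4 with a b
    simp only [pr, Fintype.sum_prod_type, ite_and]
    simp [Finset.sum_ite_irrel]
  · convert hP.minorsVanish_right b' using 4 with a b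
    simp only [pr, Fintype.sum_prod_type, ite_and]
    simp [Finset.sum_ite_irrel]
  · rw [← hP.sum_left]
    simp only [pr, Fintype.sum_prod_type, ite_and]
    simp [Finset.sum_ite_irrel]

theorem IsGoodTable.exists_condIndepOrder {M : Matrix A B ℝ} (hM : IsGoodTable M)
    (hsum : ∑ a, ∑ b, M a b = 1) :
    ∃ k, ∀ (Ω : Type) [Fintype Ω] (μ : Ω → ℝ) (α : Ω → A) (β : Ω → B),
      (∀ a b, pr μ (fun ω => α ω = a ∧ β ω = b) = M a b) → CondIndepOrder μ α β k := by
  induction hM with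
  | of_minorsVanish _ hM => exact ⟨0, fun _ _ _ _ _ h => hM.indep hsum h⟩
  | of_coupling hP _ ih =>
    obtain ⟨k, hk⟩ := ih (hP.sum_sum_eq ▸ hsum)
    exact ⟨k + 1, fun _ _ _ _ _ h => hP.condIndepOrder_succ hsum h (hk _)⟩

theorem IsGoodTable.isGoodMatrix {m n : ℕ} {M : Matrix (Fin m) (Fin n) ℝ} (hM : IsGoodTable M)
    (hsum : ∑ i, ∑ j, M i j = 1) : IsGoodMatrix M := by
  obtain ⟨k, hk⟩ := hM.exists_condIndepOrder hsum
  refine ⟨Fin m × Fin n, inferInstance, fun ω => M ω.1 ω.2, Prod.fst, Prod.snd, k,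
    ⟨fun ω => hM.nonneg _ _, ?_⟩, fun i j => (pr_fst_eq_and_snd_eq M i j).symm,
    hk _ _ _ _ (pr_fst_eq_and_snd_eq M)⟩
  rwa [Fintype.sum_prod_type]

end Realization

section FinTwo

theorem isGoodTable_corner_of_add {b c r₁ r₂ : ℝ} (h : IsGoodTable !![r₂, b; c, r₁]) :
    IsGoodTable !![b + c, r₂; r₁, 0] := by
  have hr₂ : 0 ≤ r₂ := h.nonneg 0 0
  have hb : 0 ≤ b := h.nonneg 0 1
  have hc : 0 ≤ c := h.nonneg 1 0
  have hr₁ : 0 ≤ r₁ := h.nonneg 1 1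
  refine .of_coupling (P := ![![![![0, b], ![c, 0]], ![![r₂, 0], ![0, 0]]],
      ![![![0, 0], ![0, r₁]], ![![0, 0], ![0, 0]]]])
    ⟨?_, ?_, ?_, fun a' => minorsVanish_fin_two ?_, fun b' => minorsVanish_fin_two ?_⟩ h
  · simp [Fin.forall_fin_two, *]
  · simp [Fin.forall_fin_two]
  · simp [Fin.forall_fin_two]
  · fin_cases a' <;> simp
  · fin_cases b' <;> simp

theorem isGoodTable_fin_two_of_corner {a b c d : ℝ} (ha : 0 < a) (hd : 0 < d) (hb : 0 ≤ b)
    (hc : 0 ≤ c)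
    (h : IsGoodTable !![b * c / d + b + (c + b * c / a), a - b * c / d; d - b * c / a, 0]) :
    IsGoodTable !![a, b; c, d] := by
  have h₁ : 0 ≤ a - b * c / d := h.nonneg 0 1
  have h₂ : 0 ≤ d - b * c / a := h.nonneg 1 0
  have h₃ : 0 ≤ b * c / a := by positivity
  have h₄ : 0 ≤ b * c / d := by positivity
  refine .of_coupling (P := ![![![![b * c / d, a - b * c / d], ![0, 0]], ![![b, 0], ![0, 0]]],
      ![![![c, 0], ![0, 0]], ![![b * c / a, 0], ![d - b * c / a, 0]]]])
    ⟨?_, ?_, ?_, fun a' => minorsVanish_fin_two ?_, fun b' => minorsVanish_fin_two ?_⟩ h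
  · simp only [sub_nonneg] at h₁ h₂
    simp [Fin.forall_fin_two, *]
  · simp [Fin.forall_fin_two]
  · simp [Fin.forall_fin_two]
  · fin_cases a' <;> simp [mul_div_cancel₀ _ ha.ne']
  · fin_cases b' <;> simp [div_mul_cancel₀ _ hd.ne']

theorem exists_nonneg_add_eq_mul_eq {p q : ℝ} (hp : 0 ≤ p) (hq : 0 ≤ q) (h : 4 * q ≤ p ^ 2) :
    ∃ b c : ℝ, 0 ≤ b ∧ 0 ≤ c ∧ b + c = p ∧ b * c = q := by
  have hsq : √(p ^ 2 - 4 * q) ^ 2 = p ^ 2 - 4 * q := Real.sq_sqrt (by linarith)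
  have hle : √(p ^ 2 - 4 * q) ≤ p := Real.sqrt_le_iff.2 ⟨hp, by linarith⟩
  refine ⟨(p + √(p ^ 2 - 4 * q)) / 2, (p - √(p ^ 2 - 4 * q)) / 2, by positivity, by linarith,
    by ring, ?_⟩
  linear_combination -hsq / 4

theorem isGoodTable_corner_of_four_mul_le {p r₁ r₂ : ℝ} (hp : 0 ≤ p) (hr₁ : 0 ≤ r₁)
    (hr₂ : 0 ≤ r₂) (h : 4 * (r₁ * r₂) ≤ p ^ 2) : IsGoodTable !![p, r₂; r₁, 0] := by
  obtain ⟨b, c, hb, hc, rfl, hbc⟩ := exists_nonneg_add_eq_mul_eq hp (mul_nonneg hr₁ hr₂) h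
  refine isGoodTable_corner_of_add (.of_minorsVanish ?_ (minorsVanish_fin_two ?_))
  · simp [Fin.forall_fin_two, *]
  · simp [hbc, mul_comm]

theorem sub_div_mul_sub_div_le {r₁ r₂ t : ℝ} (hr₁ : 0 < r₁) (hr₂ : 0 < r₂) (ht : 0 ≤ t)
    (hle : t ≤ r₁ * r₂) : (r₁ - t / r₂) * (r₂ - t / r₁) ≤ r₁ * r₂ - t := by
  have hsmall : t * (t / (r₁ * r₂)) ≤ t :=
    mul_le_of_le_one_right ht ((div_le_one (mul_pos hr₁ hr₂)).2 hle)
  calc (r₁ - t / r₂) * (r₂ - t / r₁)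
      = r₁ * r₂ - 2 * t + t * (t / (r₁ * r₂)) := by
        field_simp
        ring
    _ ≤ r₁ * r₂ - t := by linarith

theorem isGoodTable_corner_of_four_mul_le_natCast_mul (n : ℕ) {p r₁ r₂ : ℝ} (hp : 0 ≤ p)
    (hr₁ : 0 ≤ r₁) (hr₂ : 0 ≤ r₂) (h : 4 * (r₁ * r₂) ≤ (n + 1) * p ^ 2) :
    IsGoodTable !![p, r₂; r₁, 0] := by
  induction n generalizing p r₁ r₂ with
  | zero => exact isGoodTable_corner_of_four_mul_le hp hr₁ hr₂ (by simpa using h)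
  | succ n ih =>
    by_cases hle : 4 * (r₁ * r₂) ≤ p ^ 2
    · exact isGoodTable_corner_of_four_mul_le hp hr₁ hr₂ hle
    obtain ⟨c, rfl⟩ : ∃ c, p = c + c := ⟨p / 2, by ring⟩
    have hc : 0 ≤ c := by linarith
    have hlt : c * c < r₁ * r₂ := by linarith
    have hprod : 0 < r₁ * r₂ := (mul_self_nonneg c).trans_lt hlt
    have hr₁' : 0 < r₁ := pos_of_mul_pos_left hprod hr₂
    have hr₂' : 0 < r₂ := pos_of_mul_pos_right hprod hr₁
    have hdiv₁ : 0 ≤ c * c / r₁ := by positivity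
    have hdiv₂ : 0 ≤ c * c / r₂ := by positivity
    refine isGoodTable_corner_of_add (isGoodTable_fin_two_of_corner hr₂' hr₁' hc hc
      (ih (by positivity) ?_ ?_ ?_))
    · rw [sub_nonneg, div_le_iff₀ hr₂']
      exact hlt.le
    · rw [sub_nonneg, div_le_iff₀ hr₁', mul_comm r₂]
      exact hlt.le
    · have hdecrease : (r₁ - c * c / r₂) * (r₂ - c * c / r₁) ≤ r₁ * r₂ - c * c :=
        sub_div_mul_sub_div_le hr₁' hr₂' (mul_self_nonneg c) hlt.le
      calc 4 * ((r₁ - c * c / r₂) * (r₂ - c * c / r₁))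
          ≤ 4 * (r₁ * r₂) - (c + c) ^ 2 := by linarith
        _ ≤ (n + 1) * (c + c) ^ 2 := by
            push_cast at h
            linarith
        _ ≤ (n + 1) * (c * c / r₁ + c + (c + c * c / r₂)) ^ 2 := by
            gcongr (n + 1) * ?_ ^ 2
            linarith

theorem isGoodTable_corner {p r₁ r₂ : ℝ} (hp : 0 < p) (hr₁ : 0 ≤ r₁) (hr₂ : 0 ≤ r₂) :
    IsGoodTable !![p, r₂; r₁, 0] := by
  obtain ⟨n, hn⟩ := exists_nat_ge (4 * (r₁ * r₂) / p ^ 2)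
  refine isGoodTable_corner_of_four_mul_le_natCast_mul n hp.le hr₁ hr₂ ?_
  rw [div_le_iff₀ (by positivity)] at hn
  linarith [sq_nonneg p]

theorem isGoodTable_fin_two {a b c d : ℝ} (ha : 0 < a) (hb : 0 < b) (hc : 0 < c) (hd : 0 < d)
    (hdet : b * c ≤ a * d) : IsGoodTable !![a, b; c, d] := by
  refine isGoodTable_fin_two_of_corner ha hd hb.le hc.le
    (isGoodTable_corner (by positivity) ?_ ?_)
  · rwa [sub_nonneg, div_le_iff₀' ha]
  · rwa [sub_nonneg, div_le_iff₀ hd]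

end FinTwo

section NoisyDiagonal

variable {X Y : Type}

/-- Up to a scalar factor, the joint table of a pair that consists with some probability of two
equal copies, and otherwise of two independent copies, of a variable with law proportional to
`w`; the weight of the independent part grows with `k`. -/
noncomputable def noisyDiagonal (k : ℝ) (w : X → ℝ) : Matrix X X ℝ :=
  diagonal w + k • vecMulVec w w

theorem noisyDiagonal_apply (k : ℝ) (w : X → ℝ) (x y : X) :
    noisyDiagonal k w x y = (if x = y then w x else 0) + k * (w x * w y) := by
  simp only [noisyDiagonal, Matrix.add_apply, Matrix.smul_apply, diagonal_apply, vecMulVec_apply,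
    smul_eq_mul]

theorem noisyDiagonal_nonneg {k : ℝ} {w : X → ℝ} (hk : 0 ≤ k) (hw : ∀ x, 0 ≤ w x) (x y : X) :
    0 ≤ noisyDiagonal k w x y := by
  rw [noisyDiagonal_apply]
  exact add_nonneg (ite_nonneg (hw x) le_rfl) (mul_nonneg hk (mul_nonneg (hw x) (hw y)))

theorem transpose_noisyDiagonal (k : ℝ) (w : X → ℝ) :
    (noisyDiagonal k w)ᵀ = noisyDiagonal k w := by
  simp only [noisyDiagonal, transpose_add, transpose_smul, diagonal_transpose,
    transpose_vecMulVec]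

theorem sum_noisyDiagonal_right [Fintype X] (k : ℝ) (w : X → ℝ) (x : X) :
    ∑ y, noisyDiagonal k w x y = w x * (1 + k * ∑ y, w y) := by
  simp only [noisyDiagonal_apply, Finset.sum_add_distrib, ← Finset.mul_sum, Finset.sum_ite_eq,
    Finset.mem_univ, if_true]
  ring

theorem sum_noisyDiagonal_left [Fintype X] (k : ℝ) (w : X → ℝ) (y : X) :
    ∑ x, noisyDiagonal k w x y = w y * (1 + k * ∑ x, w x) := by
  rw [← transpose_noisyDiagonal]
  exact sum_noisyDiagonal_right k w y

theorem noisyDiagonal_option [Fintype Y] {k κ τ : ℝ} {w : Option Y → ℝ}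
    (hκ : κ * (1 + k * ∑ y, w (some y)) = k * w none)
    (hτ : τ * ((∑ y, w (some y)) * (1 + k * ∑ y, w (some y))) = w none * (1 + k * w none)) :
    noisyDiagonal k w =
      pushforward (fun p : Fin 2 × Y => if p.1 = 0 then some p.2 else none)
        (fun p : Fin 2 × Y => if p.1 = 0 then some p.2 else none)
        (!![1, κ; κ, τ] ⊗ₖ noisyDiagonal k fun y => w (some y)) := by
  have h_none_none : noisyDiagonal k w none none =
      τ * ((∑ y, w (some y)) * (1 + k * ∑ y, w (some y))) := by
    rw [noisyDiagonal_apply, if_pos rfl]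
    linear_combination -hτ
  have h_none_some (y : Y) : noisyDiagonal k w none (some y) =
      κ * (w (some y) * (1 + k * ∑ y, w (some y))) := by
    rw [noisyDiagonal_apply, if_neg (Option.some_ne_none y).symm]
    linear_combination -w (some y) * hκ
  have h_some_none (x : Y) : noisyDiagonal k w (some x) none =
      κ * (w (some x) * (1 + k * ∑ y, w (some y))) := by
    rw [noisyDiagonal_apply, if_neg (Option.some_ne_none x)]
    linear_combination -w (some x) * hκ
  have h_some_some (x y : Y) : noisyDiagonal k w (some x) (some y) =
      noisyDiagonal k (fun y => w (some y)) x y := by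
    simp only [noisyDiagonal_apply, Option.some.injEq]
  ext (_ | x) (_ | y)
  · simp [pushforward, Fintype.sum_prod_type, ← Finset.mul_sum, ← Finset.sum_mul,
      sum_noisyDiagonal_right, h_none_none]
  · simp [pushforward, Fintype.sum_prod_type, ← Finset.mul_sum, sum_noisyDiagonal_left,
      h_none_some]
  · simp [pushforward, Fintype.sum_prod_type, ← Finset.mul_sum, Finset.sum_ite_irrel,
      sum_noisyDiagonal_right, h_some_none]
  · simp [pushforward, Fintype.sum_prod_type, Finset.sum_ite_irrel, h_some_some]

theorem isGoodTable_noisyDiagonal_option [Fintype Y] [Nonempty Y] {k : ℝ} {w : Option Y → ℝ}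
    (hk : 0 < k) (hw : ∀ x, 0 < w x) (h : IsGoodTable (noisyDiagonal k fun y => w (some y))) :
    IsGoodTable (noisyDiagonal k w) := by
  have hW : 0 < ∑ y, w (some y) := Finset.sum_pos (fun y _ => hw _) Finset.univ_nonempty
  have hw₀ : 0 < w none := hw none
  rw [noisyDiagonal_option (div_mul_cancel₀ _ (by positivity)) (div_mul_cancel₀ _ (by positivity))]
  refine ((isGoodTable_fin_two ?_ ?_ ?_ ?_ ?_).kronecker h).pushforward _ _
  any_goals positivity
  generalize w none = w₀ at *
  generalize ∑ y, w (some y) = W at *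
  calc k * w₀ / (1 + k * W) * (k * w₀ / (1 + k * W))
      = w₀ / (W * (1 + k * W) ^ 2) * (k * w₀ * (k * W)) := by field_simp
    _ ≤ w₀ / (W * (1 + k * W) ^ 2) * ((1 + k * w₀) * (1 + k * W)) := by
        gcongr <;> linarith
    _ = 1 * (w₀ * (1 + k * w₀) / (W * (1 + k * W))) := by field_simp

theorem pushforward_equiv_noisyDiagonal [Fintype X] (e : X ≃ Y) (k : ℝ) (w : Y → ℝ) :
    pushforward e e (noisyDiagonal k (w ∘ e)) = noisyDiagonal k w := by
  ext x y
  simp [pushforward_equiv, noisyDiagonal_apply]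

theorem isGoodTable_noisyDiagonal [Fintype X] {k : ℝ} (hk : 0 < k) {w : X → ℝ}
    (hw : ∀ x, 0 < w x) : IsGoodTable (noisyDiagonal k w) := by
  revert w
  refine Fintype.induction_empty_option
    (P := fun X _ => ∀ {w : X → ℝ}, (∀ x, 0 < w x) → IsGoodTable (noisyDiagonal k w)) ?_ ?_ ?_ X
  · intro X Y _ e ih w hw
    let _ : Fintype X := Fintype.ofEquiv Y e.symm
    rw [← pushforward_equiv_noisyDiagonal e]
    exact (ih fun x => hw (e x)).pushforward e e
  · exact fun _ => .of_minorsVanish (fun x => x.elim) minorsVanish_of_subsingleton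
  · intro Y _ ih w hw
    cases isEmpty_or_nonempty Y
    · exact .of_minorsVanish (noisyDiagonal_nonneg hk.le fun x => (hw x).le)
        minorsVanish_of_subsingleton
    · exact isGoodTable_noisyDiagonal_option hk hw (ih fun y => hw (some y))

end NoisyDiagonal

section Positive

variable {A B : Type} [Fintype A] [Fintype B]

theorem pushforward_fst_snd_noisyDiagonal (k : ℝ) (L : Matrix A B ℝ) :
    pushforward Prod.fst Prod.snd (noisyDiagonal k fun x : A × B => L x.1 x.2) =
      L + k • vecMulVec (fun a => ∑ b, L a b) (fun b => ∑ a, L a b) := by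
  ext a b
  simp [pushforward, noisyDiagonal_apply, Fintype.sum_prod_type, vecMulVec_apply,
    ite_and, Finset.sum_ite_irrel, Finset.sum_add_distrib, ← Finset.mul_sum, Finset.sum_mul_sum]

theorem exists_pos_forall_mul_lt {ι : Type*} [Finite ι] (c : ι → ℝ) {t : ι → ℝ}
    (ht : ∀ i, 0 < t i) : ∃ η > 0, ∀ i, η * c i < t i := by
  have eventually_lt : ∀ᶠ η in nhdsWithin (0 : ℝ) (Set.Ioi 0), ∀ i, η * c i < t i := by
    refine Filter.eventually_all.2 fun i => nhdsWithin_le_nhds ?_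
    exact (continuous_id.mul continuous_const).continuousAt.eventually_lt continuousAt_const
      (by simpa using ht i)
  obtain ⟨η, h, hη⟩ := (eventually_lt.and self_mem_nhdsWithin).exists
  exact ⟨η, hη, h⟩

theorem exists_pos_eq_add_smul_vecMulVec {M : Matrix A B ℝ} (hM : ∀ a b, 0 < M a b) :
    ∃ (L : Matrix A B ℝ) (k : ℝ), (∀ a b, 0 < L a b) ∧ 0 < k ∧
      M = L + k • vecMulVec (fun a => ∑ b, L a b) (fun b => ∑ a, L a b) := by
  set p : A → ℝ := fun a => ∑ b, M a b
  set q : B → ℝ := fun b => ∑ a, M a b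
  set s : ℝ := ∑ a, ∑ b, M a b
  obtain ⟨η, hη, hlt⟩ := exists_pos_forall_mul_lt
    (fun x : Option (A × B) => x.elim s fun x => p x.1 * q x.2)
    (t := fun x => x.elim 1 fun x => M x.1 x.2) (by rintro (_ | x) <;> simp [hM])
  have hηs : 0 < 1 - η * s := sub_pos.2 (hlt none)
  have sum_right (a : A) : ∑ b, (M a b - η * (p a * q b)) = (1 - η * s) * p a := by
    have hsum : ∑ b, q b = s := Finset.sum_comm
    rw [Finset.sum_sub_distrib, ← Finset.mul_sum, ← Finset.mul_sum, hsum]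
    ring
  have sum_left (b : B) : ∑ a, (M a b - η * (p a * q b)) = (1 - η * s) * q b := by
    rw [Finset.sum_sub_distrib, ← Finset.mul_sum, ← Finset.sum_mul]
    ring
  refine ⟨of fun a b => M a b - η * (p a * q b), η / (1 - η * s) ^ 2,
    fun a b => sub_pos.2 (hlt (some (a, b))), by positivity, ?_⟩
  ext a b
  simp only [Matrix.add_apply, Matrix.smul_apply, vecMulVec_apply, of_apply, smul_eq_mul,
    sum_right, sum_left]
  field_simp
  ring

theorem isGoodTable_of_pos {M : Matrix A B ℝ} (hM : ∀ a b, 0 < M a b) : IsGoodTable M := by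
  obtain ⟨L, k, hL, hk, hLM⟩ := exists_pos_eq_add_smul_vecMulVec hM
  have h : IsGoodTable (noisyDiagonal k fun x : A × B => L x.1 x.2) :=
    isGoodTable_noisyDiagonal hk fun x => hL x.1 x.2
  rw [hLM, ← pushforward_fst_snd_noisyDiagonal]
  exact h.pushforward Prod.fst Prod.snd

end Positive

/-- Every joint probability matrix with strictly positive entries is a
good matrix. -/
theorem isGoodMatrix_of_pos {m n : ℕ} (M : Matrix (Fin m) (Fin n) ℝ)
    (hjp : IsJointProbMatrix M) (hpos : ∀ i j, 0 < M i j) :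
    IsGoodMatrix M :=
  (isGoodTable_of_pos hpos).isGoodMatrix hjp.2
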